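/- There exist constants 0<γ₀≤γ₁ (one may take γ₀ to be the unique positive solution of γ·e^γ=1 and γ₁=e²) with the following property: for every weighted graph G=(V,p,μ) with bounded geometry with constant α>0 satisfying CD(K,∞) with K≥0, every u₀∈L^∞(V,μ) with ‖Γu₀‖_∞<α/2, and u:[0,∞)→L^∞(V,μ) the solution of the modified heat equation with initial data u₀: (1) for all γ≥γ₁, all t>0 and all x∈V, P_t(e^{γu₀})(x) ≥ e^{γ·u(t)(x)}; and (2) for all γ with 0<γ≤γ₀, all t>0 and all x∈V, P_t(e^{γu₀})(x) ≤ e^{γ·u(t)(x)}. -/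

import Mathlib

/-- A weighted graph `G = (V, p, μ)`: a nonnegative kernel `p` and a positive
measure `μ` on the vertex set `V`, such that `G` is locally finite, `p` is a
Markov kernel, and `G` is connected.  Vertices `x, y` are neighbours (`x ∼ y`)
iff `0 < p x y`. -/
structure WeightedGraph (V : Type*) where
  p : V → V → ℝ
  μ : V → ℝ
  p_nonneg : ∀ x y, 0 ≤ p x y
  μ_pos : ∀ x, 0 < μ x
  locallyFinite : ∀ x, {y | 0 < p x y}.Finite
  markov : ∀ x, HasSum (p x) 1
  connected : ∀ x y : V, ∃ n : ℕ, ∃ c : Fin (n + 1) → V,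
      c 0 = x ∧ c (Fin.last n) = y ∧ ∀ i : Fin n, 0 < p (c i.castSucc) (c i.succ)

namespace WeightedGraph

variable {V : Type*} (G : WeightedGraph V)

/-- The Laplacian `Δ f (x) = ∑_{y ∼ x} p x y * (f y - f x)`.  (Summing over all
of `V` is the same, since `p x y = 0` unless `y ∼ x`.) -/
noncomputable def lap (f : V → ℝ) (x : V) : ℝ := ∑' y, G.p x y * (f y - f x)

/-- The carré du champ `Γ f (x) = (1/2) ∑_{y ∼ x} p x y * (f y - f x)^2`. -/
noncomputable def gamma (f : V → ℝ) (x : V) : ℝ := (1 / 2) * ∑' y, G.p x y * (f y - f x) ^ 2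

/-- The bilinear carré du champ
`Γ(f,g)(x) = (1/2) ∑_{y ∼ x} p x y * (f y - f x) * (g y - g x)`. -/
noncomputable def gammaBil (f g : V → ℝ) (x : V) : ℝ :=
  (1 / 2) * ∑' y, G.p x y * (f y - f x) * (g y - g x)

/-- The iterated carré du champ `Γ₂ f = (1/2) Δ (Γ f) - Γ(f, Δ f)`. -/
noncomputable def gamma2 (f : V → ℝ) (x : V) : ℝ :=
  (1 / 2) * G.lap (G.gamma f) x - G.gammaBil f (G.lap f) x

/-- Bounded geometry with constant `α > 0`: the uniform ellipticity condition (A1)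
`p x y ≥ α` whenever `x ∼ y`, and the reversibility condition (A2)
`p x y * μ x = p y x * μ y`. -/
def BoundedGeometry (α : ℝ) : Prop :=
  0 < α ∧ (∀ x y, 0 < G.p x y → α ≤ G.p x y) ∧ ∀ x y, G.p x y * G.μ x = G.p y x * G.μ y

/-- The Bakry–Émery curvature-dimension condition `CD(K, n)`:
`Γ₂ f ≥ (1/n) (Δ f)² + K Γ f`. -/
def CD (K : ℝ) (n : ℕ) : Prop :=
  ∀ f : V → ℝ, ∀ x : V, (1 / (n : ℝ)) * G.lap f x ^ 2 + K * G.gamma f x ≤ G.gamma2 f x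

/-- The Bakry–Émery curvature-dimension condition `CD(K, ∞)`: `Γ₂ f ≥ K Γ f`. -/
def CDInfty (K : ℝ) : Prop :=
  ∀ f : V → ℝ, ∀ x : V, K * G.gamma f x ≤ G.gamma2 f x

/-- The graph distance `d(x,y)`: the least length of a path of consecutive
neighbours joining `x` to `y` (and `0` if `x = y`). -/
noncomputable def dist (x y : V) : ℕ :=
  sInf {n : ℕ | ∃ c : Fin (n + 1) → V,
    c 0 = x ∧ c (Fin.last n) = y ∧ ∀ i : Fin n, 0 < G.p (c i.castSucc) (c i.succ)}

/-- The measure `μ(B(x,r)) = ∑_{y : d(x,y) ≤ r} μ y` of the closed ball `B(x,r)`. -/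
noncomputable def ballMeasure (x : V) (r : ℝ) : ℝ :=
  ∑' y : {y : V // (G.dist x y : ℝ) ≤ r}, G.μ y

end WeightedGraph

/-- The sup norm `‖f‖_∞ = sup_x |f x|` of a (bounded) function on `V`. -/
noncomputable def supNorm {V : Type*} (f : V → ℝ) : ℝ := ⨆ x, |f x|

/-- The space `L^∞(V, μ)` of bounded functions on `V`, with the sup norm
`‖f‖_∞ = sup_x |f x|`. -/
noncomputable abbrev Linf (V : Type*) := lp (fun _ : V => ℝ) ⊤

/-- `u : [0,∞) → L^∞(V,μ)` is a solution of the modified heat equation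
`∂ₜ u = Δ u + Γ u` with initial data `u₀` and derivative `u'`: `u` is continuous
on `[0,∞)`, differentiable on `(0,∞)` with derivative `u'` continuous there,
`u 0 = u₀`, and `u' t = Δ (u t) + Γ (u t)` for all `t > 0`. -/
structure IsMHESolution {V : Type*} (G : WeightedGraph V) (u u' : ℝ → Linf V)
    (u₀ : Linf V) : Prop where
  init : u 0 = u₀
  cont : ContinuousOn u (Set.Ici 0)
  derivCont : ContinuousOn u' (Set.Ioi 0)
  hasDeriv : ∀ t > (0 : ℝ), HasDerivAt u (u' t) t
  eqn : ∀ t > (0 : ℝ), ∀ x : V, u' t x = G.lap (fun y => u t y) x + G.gamma (fun y => u t y) x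

namespace WeightedGraph

/-- The heat semigroup `P_t = e^{tΔ} = ∑_{k ≥ 0} t^k Δ^k / k!`, applied pointwise. -/
noncomputable def heatSem {V : Type*} (G : WeightedGraph V) (t : ℝ) (f : V → ℝ) (x : V) : ℝ :=
  ∑' k : ℕ, t ^ k / (Nat.factorial k : ℝ) * ((G.lap)^[k] f) x

end WeightedGraph

open Filter Topology in
/-- Maximum principle in `L^∞`. -/
theorem linf_max_principle {V : Type*} [Nonempty V] {a b C : ℝ} (_hC : 0 ≤ C)
    (g g' : ℝ → Linf V) (hg : ContinuousOn g (Set.Icc a b))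
    (hd : ∀ t ∈ Set.Ioo a b, HasDerivAt g (g' t) t)
    (hineq : ∀ t ∈ Set.Ioo a b, ∀ B : ℝ, (∀ y, g t y ≤ B) → ∀ x, g' t x ≤ C * (B - g t x))
    (B : ℝ) (hB : ∀ y, g a y ≤ B) : ∀ t ∈ Set.Icc a b, ∀ x, g t x ≤ B := by
  have hbd : ∀ f : Linf V, BddAbove (Set.range fun x => f x) := by
    intro f
    refine ⟨‖f‖, ?_⟩
    rintro _ ⟨x, rfl⟩
    exact (le_abs_self _).trans (lp.norm_apply_le_norm ENNReal.top_ne_zero f x)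
  have hcoord : ∀ (f h : Linf V) (x : V), f x ≤ h x + ‖f - h‖ := by
    intro f h x
    have h1 := lp.norm_apply_le_norm ENNReal.top_ne_zero (f - h) x
    rw [lp.coeFn_sub, Pi.sub_apply, Real.norm_eq_abs] at h1
    linarith [le_abs_self (f x - h x)]
  set S : Linf V → ℝ := fun f => ⨆ x, f x with hS
  have hSle : ∀ f x, f x ≤ S f := fun f x => le_ciSup (hbd f) x
  have hSlip : LipschitzWith 1 S := by
    apply LipschitzWith.of_le_add
    intro f h
    rw [dist_eq_norm]
    exact ciSup_le fun x => (hcoord f h x).trans (by linarith [hSle h x])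
  have hSc : ContinuousOn (fun t => S (g t)) (Set.Icc a b) :=
    hSlip.continuous.comp_continuousOn hg
  have key : ∀ c ∈ Set.Ioo a b, ∀ t ∈ Set.Icc c b, S (g t) ≤ S (g c) := by
    intro c hc t ht
    refine image_le_of_liminf_slope_right_le_deriv_boundary (f := fun t => S (g t))
      (B := fun _ => S (g c)) (B' := fun _ => 0)
      (hSc.mono (Set.Icc_subset_Icc_left hc.1.le)) le_rfl continuousOn_const
      (fun x _ => hasDerivWithinAt_const _ _ _) ?_ ht
    intro s hs r hr
    have hs' : s ∈ Set.Ioo a b := ⟨hc.1.trans_le hs.1, hs.2⟩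
    have h1 := (hasDerivAt_iff_isLittleO.1 (hd s hs')).def (half_pos hr)
    have h2 : ∀ᶠ z in 𝓝[>] s, (z - s) * C ≤ 1 := by
      have : Tendsto (fun z => (z - s) * C) (𝓝[>] s) (𝓝 ((s - s) * C)) :=
        ((continuous_id.sub continuous_const).mul continuous_const).continuousAt.tendsto.mono_left
          nhdsWithin_le_nhds
      rw [sub_self, zero_mul] at this
      exact this.eventually (eventually_le_nhds one_pos)
    apply Eventually.frequently
    filter_upwards [h1.filter_mono nhdsWithin_le_nhds, h2, self_mem_nhdsWithin] with z hz1 hz2 hz3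
    have hz3 : s < z := hz3
    have hpos : 0 < z - s := sub_pos.2 hz3
    rw [slope_def_field, div_lt_iff₀ hpos]
    have : S (g z) ≤ S (g s) + r / 2 * (z - s) := by
      apply ciSup_le
      intro x
      have h3 := lp.norm_apply_le_norm ENNReal.top_ne_zero (g z - g s - (z - s) • g' s) x
      rw [lp.coeFn_sub, lp.coeFn_sub, lp.coeFn_smul] at h3
      simp only [Pi.sub_apply, Pi.smul_apply, Real.norm_eq_abs, smul_eq_mul] at h3
      have h4 := (le_abs_self _).trans (h3.trans hz1)
      rw [Real.norm_eq_abs, abs_of_pos hpos] at h4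
      have h5 := hineq s hs' (S (g s)) (hSle _) x
      have h6 := mul_le_mul_of_nonneg_left h5 hpos.le
      have h7 : (z - s) * C * (S (g s) - g s x) ≤ 1 * (S (g s) - g s x) :=
        mul_le_mul_of_nonneg_right hz2 (sub_nonneg.2 (hSle _ _))
      linarith
    nlinarith
  intro t ht x
  rcases eq_or_lt_of_le ht.1 with h | h
  · rw [← h]; exact hB x
  have hlim : Tendsto (fun c => S (g c)) (𝓝[>] a) (𝓝 (S (g a))) := by
    have := (hSc a ⟨le_rfl, ht.1.trans ht.2⟩).mono_left
      (nhdsWithin_mono a (Set.Ioc_subset_Icc_self))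
    rwa [nhdsWithin_Ioc_eq_nhdsGT (h.trans_le ht.2)] at this
  have h1 : S (g t) ≤ S (g a) := by
    refine ge_of_tendsto hlim ?_
    filter_upwards [Ioo_mem_nhdsGT h] with c hc
    exact key c ⟨hc.1, hc.2.trans_le ht.2⟩ t ⟨hc.2.le, ht.2⟩
  exact (hSle _ x).trans (h1.trans (ciSup_le hB))

namespace WeightedGraph

variable {V : Type*} (G : WeightedGraph V)

noncomputable def nb (x : V) : Finset V := (G.locallyFinite x).toFinset

theorem p_zero {x y : V} (h : y ∉ G.nb x) : G.p x y = 0 := by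
  have : ¬ 0 < G.p x y := by simpa [nb] using h
  exact le_antisymm (not_lt.1 this) (G.p_nonneg x y)

theorem sum_p (x : V) : ∑ y ∈ G.nb x, G.p x y = 1 := by
  rw [← (G.markov x).tsum_eq]
  exact (tsum_eq_sum fun y hy => G.p_zero hy).symm

theorem lap_eq (f : V → ℝ) (x : V) : G.lap f x = ∑ y ∈ G.nb x, G.p x y * (f y - f x) :=
  tsum_eq_sum fun y hy => by rw [G.p_zero hy, zero_mul]

theorem gamma_eq (f : V → ℝ) (x : V) :
    G.gamma f x = 1 / 2 * ∑ y ∈ G.nb x, G.p x y * (f y - f x) ^ 2 := by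
  unfold gamma
  rw [tsum_eq_sum fun y hy => by rw [G.p_zero hy, zero_mul]]

theorem gammaBil_eq (f g : V → ℝ) (x : V) :
    G.gammaBil f g x = 1 / 2 * ∑ y ∈ G.nb x, G.p x y * (f y - f x) * (g y - g x) := by
  unfold gammaBil
  rw [tsum_eq_sum fun y hy => by rw [G.p_zero hy, zero_mul, zero_mul]]

theorem lap_bound (f : Linf V) (x : V) : ‖G.lap (fun y => f y) x‖ ≤ 2 * ‖f‖ := by
  rw [lap_eq]
  refine (norm_sum_le _ _).trans ?_
  have : ∀ y ∈ G.nb x, ‖G.p x y * (f y - f x)‖ ≤ G.p x y * (2 * ‖f‖) := by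
    intro y _
    rw [norm_mul, Real.norm_of_nonneg (G.p_nonneg x y)]
    refine mul_le_mul_of_nonneg_left ?_ (G.p_nonneg x y)
    have h1 := lp.norm_apply_le_norm ENNReal.top_ne_zero f x
    have h2 := lp.norm_apply_le_norm ENNReal.top_ne_zero f y
    exact (norm_sub_le _ _).trans (by linarith)
  refine (Finset.sum_le_sum this).trans ?_
  rw [← Finset.sum_mul, sum_p, one_mul]

/-- The Laplacian as a bounded operator on `L^∞`. -/
noncomputable def lapL : Linf V →L[ℝ] Linf V :=
  LinearMap.mkContinuous
    { toFun := fun f => ⟨G.lap (fun y => f y), memℓp_infty ⟨2 * ‖f‖, by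
        rintro _ ⟨x, rfl⟩; exact G.lap_bound f x⟩⟩
      map_add' := by
        intro f g
        ext x
        change G.lap _ x = G.lap _ x + G.lap _ x
        simp only [lap_eq, ← Finset.sum_add_distrib, lp.coeFn_add, Pi.add_apply]
        exact Finset.sum_congr rfl fun y _ => by ring
      map_smul' := by
        intro c f
        ext x
        change G.lap _ x = c * G.lap _ x
        simp only [lap_eq, Finset.mul_sum, lp.coeFn_smul, Pi.smul_apply, smul_eq_mul]
        exact Finset.sum_congr rfl fun y _ => by ring } 2
    (fun f => lp.norm_le_of_forall_le (by positivity) fun x => G.lap_bound f x)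

theorem lapL_apply (f : Linf V) (x : V) : G.lapL f x = G.lap (fun y => f y) x := rfl

/-- The carre du champ as a map of `L^∞`. -/
noncomputable def gammaL (f : Linf V) : Linf V := (1 / 2 : ℝ) • G.lapL (f * f) - f * G.lapL f

theorem gammaL_apply (f : Linf V) (x : V) : G.gammaL f x = G.gamma (fun y => f y) x := by
  unfold gammaL
  rw [lp.coeFn_sub, lp.coeFn_smul, lp.infty_coeFn_mul]
  simp only [Pi.sub_apply, Pi.smul_apply, Pi.mul_apply, smul_eq_mul, lapL_apply, lap_eq, gamma_eq,
    lp.infty_coeFn_mul, Finset.mul_sum, ← Finset.sum_sub_distrib]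
  exact Finset.sum_congr rfl fun y _ => by ring

theorem heatSem_eq [Nonempty V] (t : ℝ) (f : Linf V) (x : V) :
    G.heatSem t (fun y => f y) x = (NormedSpace.exp (t • G.lapL) f : Linf V) x := by
  have h1 := NormedSpace.exp_series_hasSum_exp' (𝕂 := ℝ) (t • G.lapL)
  have h2 := h1.mapL (ContinuousLinearMap.apply ℝ (Linf V) f)
  have h3 := h2.mapL (lp.evalCLM ℝ (fun _ : V => ℝ) ⊤ x)
  unfold heatSem
  have hit : ∀ k : ℕ, ((G.lap)^[k] (fun y => f y)) = fun y => ((G.lapL ^ k) f : Linf V) y := by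
    intro k
    induction k with
    | zero => rfl
    | succ k ih =>
      rw [Function.iterate_succ_apply', ih, pow_succ']
      rfl
  refine Eq.trans ?_ h3.tsum_eq
  congr 1
  ext k
  rw [hit]
  have hpow : ((t • G.lapL) ^ k) f = t ^ k • (G.lapL ^ k) f := by
    clear h1 h2 h3
    induction k with
    | zero =>
      rw [pow_zero, pow_zero, pow_zero, one_smul]
    | succ k ih =>
      rw [pow_succ', pow_succ' G.lapL]
      change t • G.lapL (((t • G.lapL) ^ k) f) = t ^ (k + 1) • G.lapL ((G.lapL ^ k) f)
      rw [ih, map_smul, smul_smul, pow_succ']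
  change _ = (((k.factorial : ℝ)⁻¹) * ((((t • G.lapL) ^ k) f : Linf V) x))
  rw [hpow, lp.coeFn_smul, Pi.smul_apply, smul_eq_mul]
  ring

theorem exp_apply [Nonempty V] (f : Linf V) (x : V) :
    (NormedSpace.exp f : Linf V) x = Real.exp (f x) := by
  have h1 := NormedSpace.exp_series_hasSum_exp' (𝕂 := ℝ) f
  have h3 := h1.mapL (lp.evalCLM ℝ (fun _ : V => ℝ) ⊤ x)
  have h4 := NormedSpace.exp_series_hasSum_exp' (𝕂 := ℝ) (f x)
  rw [Real.exp_eq_exp_ℝ]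
  refine h3.unique ?_
  refine (congrArg (fun F => HasSum F _) (funext fun k => ?_)).mpr h4
  change ((k.factorial : ℝ)⁻¹) * ((f ^ k : Linf V) x) = _
  rw [lp.infty_coeFn_pow]
  rfl

theorem edge_le {α : ℝ} (hG : G.BoundedGeometry α) (f : V → ℝ) (x y : V) (hy : y ∈ G.nb x)
    (h : G.gamma f x ≤ α / 2) : |f y - f x| ≤ 1 := by
  have hp : 0 < G.p x y := by simpa [nb] using hy
  have h1 : G.p x y * (f y - f x) ^ 2 ≤ ∑ y ∈ G.nb x, G.p x y * (f y - f x) ^ 2 :=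
    Finset.single_le_sum (f := fun y => G.p x y * (f y - f x) ^ 2)
      (fun z _ => mul_nonneg (G.p_nonneg x z) (sq_nonneg _)) hy
  rw [gamma_eq] at h
  have h2 := mul_le_mul_of_nonneg_right (hG.2.1 x y hp) (sq_nonneg (f y - f x))
  have h3 : α * (f y - f x) ^ 2 ≤ α * 1 := by linarith
  have h4 := le_of_mul_le_mul_left h3 hG.1
  exact (sq_le_one_iff_abs_le_one _).1 h4

theorem gammaL_continuous : Continuous G.gammaL := by
  unfold gammaL
  fun_prop

theorem gammaL_hasDerivAt [Nonempty V] {u : ℝ → Linf V} {v : Linf V} {t : ℝ}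
    (h : HasDerivAt u v t) :
    HasDerivAt (fun s => G.gammaL (u s))
      ((1 / 2 : ℝ) • G.lapL (v * u t + u t * v) - (v * G.lapL (u t) + u t * G.lapL v)) t := by
  unfold gammaL
  have h1 := (G.lapL.hasFDerivAt.comp_hasDerivAt t (h.mul h)).const_smul (1 / 2 : ℝ)
  have h2 := h.mul (G.lapL.hasFDerivAt.comp_hasDerivAt t h)
  exact h1.sub h2

theorem gammaL_deriv_apply (u v : Linf V) (x : V) :
    ((1 / 2 : ℝ) • G.lapL (v * u + u * v) - (v * G.lapL u + u * G.lapL v) : Linf V) x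
      = 2 * G.gammaBil (fun y => u y) (fun y => v y) x := by
  rw [lp.coeFn_sub, lp.coeFn_smul, lp.coeFn_add, lp.infty_coeFn_mul, lp.infty_coeFn_mul]
  simp only [Pi.sub_apply, Pi.add_apply, Pi.smul_apply, Pi.mul_apply, smul_eq_mul, lapL_apply,
    lap_eq, gammaBil_eq,
    lp.infty_coeFn_mul, lp.coeFn_add, Finset.mul_sum, ← Finset.sum_sub_distrib,
    ← Finset.sum_add_distrib]
  exact Finset.sum_congr rfl fun y _ => by ring

/-- Pointwise differential inequality for the carre du champ. -/
theorem gamma_ineq {α K : ℝ} (hG : G.BoundedGeometry α) (hK : 0 ≤ K) (hCD : G.CDInfty K)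
    (u v : V → ℝ) (hv : ∀ x, v x = G.lap u x + G.gamma u x)
    (hu : ∀ x, G.gamma u x ≤ α / 2) (B : ℝ) (hB : ∀ x, G.gamma u x ≤ B) (x : V) :
    2 * G.gammaBil u v x ≤ 2 * (B - G.gamma u x) := by
  have h1 := hCD u x
  have hg0 : 0 ≤ G.gamma u x := by
    rw [gamma_eq]
    exact mul_nonneg (by norm_num)
      (Finset.sum_nonneg fun y _ => mul_nonneg (G.p_nonneg x y) (sq_nonneg _))
  have h2 : 0 ≤ G.gamma2 u x := (mul_nonneg hK hg0).trans h1
  unfold gamma2 at h2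
  have h3 : 2 * G.gammaBil u v x = 2 * G.gammaBil u (G.lap u) x
      + 2 * G.gammaBil u (G.gamma u) x := by
    simp only [gammaBil_eq, hv, Finset.mul_sum, ← Finset.sum_add_distrib, gammaBil_eq]
    exact Finset.sum_congr rfl fun y _ => by ring
  have h4 : G.lap (G.gamma u) x + 2 * G.gammaBil u (G.gamma u) x
      = ∑ y ∈ G.nb x, G.p x y * (1 + (u y - u x)) * (G.gamma u y - G.gamma u x) := by
    rw [lap_eq, gammaBil_eq, ← mul_assoc]
    norm_num
    rw [← Finset.sum_add_distrib]
    exact Finset.sum_congr rfl fun y _ => by ring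
  have h5 : ∑ y ∈ G.nb x, G.p x y * (1 + (u y - u x)) * (G.gamma u y - G.gamma u x)
      ≤ ∑ y ∈ G.nb x, G.p x y * (2 * (B - G.gamma u x)) := by
    refine Finset.sum_le_sum fun y hy => ?_
    rw [mul_assoc]
    refine mul_le_mul_of_nonneg_left ?_ (G.p_nonneg x y)
    have := abs_le.1 (G.edge_le hG u x y hy (hu x))
    exact (mul_le_mul_of_nonneg_left (by linarith [hB y]) (by linarith)).trans
      (mul_le_mul_of_nonneg_right (by linarith) (by linarith [hB x]))
  rw [← Finset.sum_mul, sum_p, one_mul] at h5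
  linarith

open Filter Topology in
/-- Gradient estimate: the sup of the carre du champ does not increase. -/
theorem gradient_estimate [Nonempty V] {α K : ℝ} (hG : G.BoundedGeometry α) (hK : 0 ≤ K)
    (hCD : G.CDInfty K) (u₀ : Linf V) (h0 : supNorm (G.gamma (fun x => u₀ x)) < α / 2)
    (u u' : ℝ → Linf V) (hu : IsMHESolution G u u' u₀) (t : ℝ) (ht : 0 ≤ t) (x : V) :
    G.gamma (fun y => u t y) x ≤ α / 2 := by
  set M := supNorm (G.gamma (fun x => u₀ x)) with hM
  have hM0 : ∀ x, G.gammaL (u 0) x ≤ M := by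
    intro x
    rw [hu.init, gammaL_apply]
    refine (le_abs_self _).trans ?_
    refine le_ciSup (f := fun x => |G.gamma (fun x => u₀ x) x|) ?_ x
    refine ⟨‖G.gammaL u₀‖, ?_⟩
    rintro _ ⟨y, rfl⟩
    have := lp.norm_apply_le_norm ENNReal.top_ne_zero (G.gammaL u₀) y
    rwa [gammaL_apply] at this
  have hgc : ContinuousOn (fun s => G.gammaL (u s)) (Set.Ici 0) :=
    G.gammaL_continuous.comp_continuousOn hu.cont
  have hgcx : ∀ x, ContinuousOn (fun s => G.gammaL (u s) x) (Set.Ici 0) := fun x =>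
    (lp.evalCLM ℝ (fun _ : V => ℝ) ⊤ x).continuous.comp_continuousOn hgc
  have hsub : Set.Icc 0 t ⊆ {s | ∀ x, G.gammaL (u s) x ≤ M} := by
    refine IsClosed.Icc_subset_of_forall_mem_nhdsWithin ?_ hM0 ?_
    · have : {s | ∀ x, G.gammaL (u s) x ≤ M} ∩ Set.Icc 0 t
          = Set.Icc 0 t ∩ ⋂ x, (Set.Icc 0 t ∩ {s | G.gammaL (u s) x ≤ M}) := by
        ext s
        simp only [Set.mem_inter_iff, Set.mem_ofPred_eq, Set.mem_iInter]
        constructor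
        · rintro ⟨h1, h2⟩
          exact ⟨h2, fun x => ⟨h2, h1 x⟩⟩
        · rintro ⟨h1, h2⟩
          exact ⟨fun x => (h2 x).2, h1⟩
      rw [this]
      refine isClosed_Icc.inter (isClosed_iInter fun x => ?_)
      exact ((hgcx x).mono Set.Icc_subset_Ici_self).preimage_isClosed_of_isClosed isClosed_Icc
        isClosed_Iic
    · rintro s ⟨hs, hst⟩
      have hs0 : 0 ≤ s := hst.1
      have hε : 0 < α / 2 - M := by linarith
      have hev : ∀ᶠ z in 𝓝[≥] s, Dist.dist (G.gammaL (u z)) (G.gammaL (u s)) < α / 2 - M := by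
        have h1 : Tendsto (fun z => G.gammaL (u z)) (𝓝[≥] s) (𝓝 (G.gammaL (u s))) :=
          (hgc s hs0).mono_left (nhdsWithin_mono s (Set.Ici_subset_Ici.2 hs0))
        exact h1.eventually (Metric.ball_mem_nhds _ hε)
      obtain ⟨b, hb, hsb⟩ := (mem_nhdsGE_iff_exists_Icc_subset).1 hev
      have hb : s < b := hb
      filter_upwards [Ioc_mem_nhdsGT hb] with z hz
      refine linf_max_principle (a := s) (b := b) (C := 2) (by norm_num)
        (fun s => G.gammaL (u s)) _ (hgc.mono fun r hr => hs0.trans hr.1)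
        (fun r hr => G.gammaL_hasDerivAt (hu.hasDeriv r (hs0.trans_lt hr.1))) ?_ M hs z
        ⟨hz.1.le, hz.2⟩
      intro r hr B hB x
      have hr0 := hs0.trans_lt hr.1
      rw [gammaL_deriv_apply]
      simp only [gammaL_apply] at hB ⊢
      refine G.gamma_ineq hG hK hCD _ _ (hu.eqn r hr0) ?_ B hB x
      intro y
      have h1 : Dist.dist (G.gammaL (u r)) (G.gammaL (u s)) < α / 2 - M := hsb ⟨hr.1.le, hr.2.le⟩
      rw [dist_eq_norm] at h1
      have h2 := lp.norm_apply_le_norm ENNReal.top_ne_zero (G.gammaL (u r) - G.gammaL (u s)) y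
      rw [lp.coeFn_sub, Pi.sub_apply, Real.norm_eq_abs] at h2
      have h3 := le_abs_self (G.gammaL (u r) y - G.gammaL (u s) y)
      have h4 : G.gammaL (u s) y ≤ M := hs y
      rw [← gammaL_apply]
      linarith
  have := hsub ⟨ht, le_rfl⟩ x
  rw [gammaL_apply] at this
  linarith

theorem exp_lower {γ d : ℝ} (hγ : 2 ≤ γ) (hd : |d| ≤ 1) :
    γ * (d + d ^ 2 / 2) ≤ Real.exp (γ * d) - 1 := by
  have hd' := abs_le.1 hd
  have hγ0 : 0 < γ := by linarith
  rcases le_total 0 d with h | h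
  · have h1 := Real.quadratic_le_exp_of_nonneg (mul_nonneg hγ0.le h)
    have : γ * d ^ 2 ≤ (γ * d) ^ 2 := by nlinarith [sq_nonneg d, mul_nonneg hγ0.le (sq_nonneg d)]
    linarith
  · rcases le_total (-2) (γ * d) with h2 | h2
    · have h3 := Real.add_one_le_exp (γ * d / 2)
      have h4 : Real.exp (γ * d) = Real.exp (γ * d / 2) ^ 2 := by
        rw [← Real.exp_nat_mul]; congr 1; push_cast; ring
      have h5 : (γ * d / 2 + 1) ^ 2 ≤ Real.exp (γ * d / 2) ^ 2 :=
        pow_le_pow_left₀ (by linarith) h3 2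
      have : 2 * (γ * d ^ 2) ≤ (γ * d) ^ 2 := by nlinarith [mul_nonneg hγ0.le (sq_nonneg d)]
      nlinarith
    · have := Real.exp_pos (γ * d)
      have h3 : γ * d ^ 2 ≤ - (γ * d) := by nlinarith [mul_nonneg hγ0.le (neg_nonneg.2 h)]
      linarith

theorem exp_upper {γ d : ℝ} (hγ0 : 0 < γ) (hγ : γ ≤ 1 / 2) (hd : |d| ≤ 1) :
    Real.exp (γ * d) - 1 ≤ γ * (d + d ^ 2 / 2) := by
  have h1 : |γ * d| ≤ 1 := by
    rw [abs_mul, abs_of_pos hγ0]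
    nlinarith [abs_nonneg d]
  have h2 := (le_abs_self _).trans (Real.abs_exp_sub_one_sub_id_le h1)
  have : 2 * (γ * d) ^ 2 ≤ γ * d ^ 2 := by nlinarith [mul_nonneg hγ0.le (sq_nonneg d)]
  linarith

theorem lap_exp (γ : ℝ) (f : V → ℝ) (x : V) :
    G.lap (fun y => Real.exp (γ * f y)) x
      = Real.exp (γ * f x) * ∑ y ∈ G.nb x, G.p x y * (Real.exp (γ * (f y - f x)) - 1) := by
  rw [lap_eq, Finset.mul_sum]
  refine Finset.sum_congr rfl fun y _ => ?_
  have : Real.exp (γ * f y) = Real.exp (γ * f x) * Real.exp (γ * (f y - f x)) := by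
    rw [← Real.exp_add]; congr 1; ring
  rw [this]; ring

theorem rhs_eq (γ : ℝ) (f : V → ℝ) (x : V) :
    γ * (G.lap f x + G.gamma f x)
      = ∑ y ∈ G.nb x, G.p x y * (γ * ((f y - f x) + (f y - f x) ^ 2 / 2)) := by
  rw [lap_eq, gamma_eq, Finset.mul_sum, ← Finset.sum_add_distrib, Finset.mul_sum]
  exact Finset.sum_congr rfl fun y _ => by ring

/-- Comparison with the heat semigroup: `z` is a subsolution with `z 0 = 0`. -/
theorem subsol [Nonempty V] (z z' : ℝ → Linf V) (hc : ContinuousOn z (Set.Ici 0))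
    (hd : ∀ t > 0, HasDerivAt z (z' t) t) (hz0 : z 0 = 0)
    (hle : ∀ t > 0, ∀ x, z' t x ≤ G.lapL (z t) x) (t : ℝ) (ht : 0 < t) (x : V) : z t x ≤ 0 := by
  refine linf_max_principle (a := 0) (b := t) (C := 1) (by norm_num) z z'
    (hc.mono Set.Icc_subset_Ici_self) (fun s hs => hd s hs.1) ?_ 0 ?_ t ⟨ht.le, le_rfl⟩ x
  · intro s hs B hB x
    refine (hle s hs.1 x).trans ?_
    rw [lapL_apply, lap_eq]
    refine (Finset.sum_le_sum (g := fun y => G.p x y * (B - z s x)) fun y _ =>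
      mul_le_mul_of_nonneg_left (by linarith [hB y]) (G.p_nonneg x y)).trans ?_
    rw [← Finset.sum_mul, sum_p]
  · intro y
    rw [hz0]
    exact le_rfl

end WeightedGraph

/-- **semigroup comparison.** There exist constants `0 < γ₀ ≤ γ₁`
such that for every weighted graph with bounded geometry (constant `α > 0`)
satisfying `CD(K,∞)` with `K ≥ 0`, every `u₀ ∈ L^∞(V,μ)` with `‖Γu₀‖_∞ < α/2` and
`u` the solution of the modified heat equation with initial data `u₀`:
for `γ ≥ γ₁`, `P_t(e^{γu₀}) ≥ e^{γ u(t)}`, and for `0 < γ ≤ γ₀`,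
`P_t(e^{γu₀}) ≤ e^{γ u(t)}` (pointwise, for all `t > 0`). -/
theorem semigroup_comparison :
    ∃ γ₀ γ₁ : ℝ, 0 < γ₀ ∧ γ₀ ≤ γ₁ ∧
      ∀ (V : Type) [Countable V] (G : WeightedGraph V) (α K : ℝ),
        G.BoundedGeometry α → 0 ≤ K → G.CDInfty K →
        ∀ u₀ : Linf V, supNorm (G.gamma (fun x => u₀ x)) < α / 2 →
        ∀ u u' : ℝ → Linf V, IsMHESolution G u u' u₀ →
          (∀ γ : ℝ, γ₁ ≤ γ → ∀ t : ℝ, 0 < t → ∀ x : V,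
            Real.exp (γ * u t x) ≤ G.heatSem t (fun y => Real.exp (γ * u₀ y)) x) ∧
          (∀ γ : ℝ, 0 < γ → γ ≤ γ₀ → ∀ t : ℝ, 0 < t → ∀ x : V,
            G.heatSem t (fun y => Real.exp (γ * u₀ y)) x ≤ Real.exp (γ * u t x)) := by
  refine ⟨1 / 2, 2, by norm_num, by norm_num, ?_⟩
  intro V _ G α K hG hK hCD u₀ h0 u u' hu
  rcases isEmpty_or_nonempty V with hV | hV
  · exact ⟨fun _ _ _ _ x => hV.elim x, fun _ _ _ _ _ x => hV.elim x⟩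
  have hgrad := G.gradient_estimate hG hK hCD u₀ h0 u u' hu
  have hw : ∀ (γ : ℝ) (f : Linf V) (x : V),
      (NormedSpace.exp (γ • f) : Linf V) x = Real.exp (γ * f x) := by
    intro γ f x
    rw [WeightedGraph.exp_apply, lp.coeFn_smul]
    rfl
  have hwc : ∀ γ : ℝ, ContinuousOn (fun t => NormedSpace.exp (γ • u t)) (Set.Ici 0) := by
    intro γ
    exact (NormedSpace.exp_continuous).comp_continuousOn (hu.cont.const_smul γ)
  have hwd : ∀ γ : ℝ, ∀ t > 0, HasDerivAt (fun t => NormedSpace.exp (γ • u t))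
      (NormedSpace.exp (γ • u t) * (γ • u' t)) t := by
    intro γ t ht
    exact (hasFDerivAt_exp (𝕂 := ℝ)).comp_hasDerivAt t ((hu.hasDeriv t ht).const_smul γ)
  have hvd : ∀ (f : Linf V) (t : ℝ), HasDerivAt (fun t => NormedSpace.exp (t • G.lapL) f)
      (G.lapL (NormedSpace.exp (t • G.lapL) f)) t := by
    intro f t
    exact (ContinuousLinearMap.apply ℝ (Linf V) f).hasFDerivAt.comp_hasDerivAt t
      (hasDerivAt_exp_smul_const' (𝕂 := ℝ) G.lapL t)
  have hvc : ∀ f : Linf V, ContinuousOn (fun t : ℝ => NormedSpace.exp (t • G.lapL) f)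
      (Set.Ici 0) := fun f t _ => (hvd f t).continuousAt.continuousWithinAt
  have hv0 : ∀ f : Linf V, NormedSpace.exp ((0 : ℝ) • G.lapL) f = f := by
    intro f
    have h : (0 : ℝ) • G.lapL = 0 := zero_smul ℝ G.lapL
    rw [h, NormedSpace.exp_zero]
    rfl
  have hsem : ∀ (γ t : ℝ) (x : V), G.heatSem t (fun y => Real.exp (γ * u₀ y)) x
      = (NormedSpace.exp (t • G.lapL) (NormedSpace.exp (γ • u 0)) : Linf V) x := by
    intro γ t x
    rw [← G.heatSem_eq]
    simp only [hw, hu.init]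
  have hw'x : ∀ (γ t : ℝ) (x : V), 0 < t → (NormedSpace.exp (γ • u t) * (γ • u' t) : Linf V) x
      = Real.exp (γ * u t x) * ∑ y ∈ G.nb x, G.p x y *
        (γ * ((u t y - u t x) + (u t y - u t x) ^ 2 / 2)) := by
    intro γ t x ht
    rw [lp.infty_coeFn_mul, Pi.mul_apply, hw, lp.coeFn_smul, Pi.smul_apply, hu.eqn t ht x,
      smul_eq_mul, ← G.rhs_eq γ (fun y => u t y) x]
  have hLw : ∀ (γ t : ℝ) (x : V), G.lapL (NormedSpace.exp (γ • u t)) x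
      = Real.exp (γ * u t x) * ∑ y ∈ G.nb x, G.p x y *
        (Real.exp (γ * (u t y - u t x)) - 1) := by
    intro γ t x
    rw [G.lapL_apply]
    simp only [hw]
    exact G.lap_exp γ (fun y => u t y) x
  constructor
  · intro γ hγ t ht x
    have := G.subsol
      (fun t => NormedSpace.exp (γ • u t) - NormedSpace.exp (t • G.lapL) (NormedSpace.exp (γ • u 0)))
      _ ((hwc γ).sub (hvc _)) (fun t ht => (hwd γ t ht).sub (hvd _ t)) (sub_eq_zero.2 (hv0 _).symm) ?_ t ht x
    · rw [lp.coeFn_sub, Pi.sub_apply, hw] at this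
      rw [hsem]
      linarith
    · intro t ht x
      rw [map_sub, lp.coeFn_sub, lp.coeFn_sub, Pi.sub_apply, Pi.sub_apply, hw'x γ t x ht, hLw]
      refine sub_le_sub_right (mul_le_mul_of_nonneg_left (Finset.sum_le_sum fun y hy =>
        mul_le_mul_of_nonneg_left ?_ (G.p_nonneg x y)) (Real.exp_pos _).le) _
      exact WeightedGraph.exp_lower hγ (G.edge_le hG _ x y hy (hgrad t (le_of_lt ht) x))
  · intro γ hγ0 hγ t ht x
    have := G.subsol
      (fun t => NormedSpace.exp (t • G.lapL) (NormedSpace.exp (γ • u 0)) - NormedSpace.exp (γ • u t))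
      _ ((hvc _).sub (hwc γ)) (fun t ht => (hvd _ t).sub (hwd γ t ht)) (sub_eq_zero.2 (hv0 _)) ?_ t ht x
    · rw [lp.coeFn_sub, Pi.sub_apply, hw] at this
      rw [hsem]
      linarith
    · intro t ht x
      rw [map_sub, lp.coeFn_sub, lp.coeFn_sub, Pi.sub_apply, Pi.sub_apply, hw'x γ t x ht, hLw]
      refine sub_le_sub_left (mul_le_mul_of_nonneg_left (Finset.sum_le_sum fun y hy =>
        mul_le_mul_of_nonneg_left ?_ (G.p_nonneg x y)) (Real.exp_pos _).le) _
      exact WeightedGraph.exp_upper hγ0 hγ (G.edge_le hG _ x y hy (hgrad t (le_of_lt ht) x))
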